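/- Let n ≥ 2 be an integer and f₁ ∈ ℝ. There exists a function f : ℝ → ℝ which is continuously differentiable on [0, +∞) and twice differentiable at every s > 0, with f(0) = f₁ and f'(0) = 0, such that f'(s) ∈ (−1, 1) for every s ≥ 0, and f''(s) = (1 − f'(s)²)·(1 − (n−1)·(cosh(s)/sinh(s))·f'(s)) for every s > 0. -/

import Mathlib

open Set Filter Topology BoundedContinuousFunction

lemma aux_tanh_deriv (x : ℝ) : HasDerivAt Real.tanh (1 - Real.tanh x ^ 2) x := by
  have hc : Real.cosh x ≠ 0 := (Real.cosh_pos x).ne'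
  have h := (Real.hasDerivAt_sinh x).div (Real.hasDerivAt_cosh x) hc
  have e : Real.tanh = Real.sinh / Real.cosh := by
    funext y; simp [Real.tanh_eq_sinh_div_cosh]
  rw [← e] at h
  refine h.congr_deriv ?_
  rw [Real.tanh_eq_sinh_div_cosh]
  field_simp

lemma aux_tanh_mem (x : ℝ) : Real.tanh x ∈ Ioo (-1 : ℝ) 1 :=
  Real.tanh_bijOn.mapsTo (mem_univ x)

lemma aux_g_lip (x y : ℝ) : |(y - Real.tanh y) - (x - Real.tanh x)| ≤ |y - x| := by
  have h := Convex.norm_image_sub_le_of_norm_hasDerivWithin_le (s := univ) (C := 1)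
    (f := fun z => z - Real.tanh z) (f' := fun z => 1 - (1 - Real.tanh z ^ 2))
    (x := x) (y := y)
    (fun z _ => ((hasDerivAt_id z).sub (aux_tanh_deriv z)).hasDerivWithinAt)
    (fun z _ => by
      have := aux_tanh_mem z
      rw [Real.norm_eq_abs, abs_le]
      constructor <;> nlinarith [this.1, this.2]) convex_univ (mem_univ _) (mem_univ _)
  simpa [Real.norm_eq_abs] using h

noncomputable def auxH (a b : ℝ) : ℝ := b * (1 - dslope Real.tanh 0 (a * b))

lemma aux_dslope_cont : Continuous (dslope Real.tanh 0) := by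
  rw [← continuousOn_univ, continuousOn_dslope univ_mem]
  exact ⟨fun x _ => (aux_tanh_deriv x).continuousAt.continuousWithinAt,
    (aux_tanh_deriv 0).differentiableAt⟩

lemma auxH_mul (a b : ℝ) : a * auxH a b = a * b - Real.tanh (a * b) := by
  have h := sub_smul_dslope Real.tanh 0 (a * b)
  simp only [sub_zero, Real.tanh_zero, smul_eq_mul] at h
  unfold auxH
  linear_combination -h

lemma auxH_zero (b : ℝ) : auxH 0 b = 0 := by
  have : deriv Real.tanh 0 = 1 := by simpa using (aux_tanh_deriv 0).deriv
  simp [auxH, this]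

lemma auxH_lip (a b c : ℝ) : |auxH a b - auxH a c| ≤ |b - c| := by
  rcases eq_or_ne a 0 with rfl | ha
  · simp [auxH_zero]
  · have h := aux_g_lip (a * c) (a * b)
    rw [← auxH_mul, ← auxH_mul, ← mul_sub, ← mul_sub, abs_mul, abs_mul] at h
    exact le_of_mul_le_mul_left h (abs_pos.2 ha)

lemma auxH_bound (a b : ℝ) : |auxH a b| ≤ |b| := by
  have := auxH_lip a b 0
  simpa [auxH] using this

lemma auxH_cont : Continuous (fun p : ℝ × ℝ => auxH p.1 p.2) := by
  unfold auxH
  have := aux_dslope_cont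
  fun_prop

/-- The integrand. -/
noncomputable def auxI (m : ℕ) (v : ℝ →ᵇ ℝ) (y t : ℝ) : ℝ :=
  t ^ m * (1 / Real.sqrt (1 + (y * t) ^ 2) + m * auxH (y * t) (v (y * t)))

lemma auxSqrt_cont : Continuous (fun x : ℝ => 1 / Real.sqrt (1 + x ^ 2)) := by
  refine continuous_const.div (by fun_prop) (fun x => ?_)
  have : 0 < 1 + x ^ 2 := by positivity
  exact (Real.sqrt_pos.2 this).ne'

lemma auxI_cont (m : ℕ) (v : ℝ →ᵇ ℝ) : Continuous (Function.uncurry (auxI m v)) := by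
  have h1 : Continuous (fun p : ℝ × ℝ => p.1 * p.2) := by fun_prop
  have h2 := auxSqrt_cont.comp h1
  have h3 : Continuous (fun p : ℝ × ℝ => auxH (p.1 * p.2) (v (p.1 * p.2))) :=
    auxH_cont.comp (h1.prodMk (v.continuous.comp h1))
  have h4 : Continuous (fun p : ℝ × ℝ => p.2 ^ m) := by fun_prop
  exact h4.mul (h2.add (continuous_const.mul h3))

lemma auxI_cont1 (m : ℕ) (v : ℝ →ᵇ ℝ) (y : ℝ) : Continuous (auxI m v y) :=
  (auxI_cont m v).comp (by fun_prop : Continuous (fun t : ℝ => (y, t)))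

lemma aux_int_le (m : ℕ) (F : ℝ → ℝ) (C : ℝ)
    (h : ∀ t ∈ Ioc (0 : ℝ) 1, ‖F t‖ ≤ t ^ m * C) :
    ‖∫ t in (0 : ℝ)..1, F t‖ ≤ C / (m + 1) := by
  have h1 := intervalIntegral.norm_integral_le_of_norm_le (a := 0) (b := 1)
    (μ := MeasureTheory.volume) (f := F) (g := fun t => t ^ m * C) zero_le_one
    (MeasureTheory.ae_of_all _ (fun t ht => h t ht))
    ((by fun_prop : Continuous (fun t : ℝ => t ^ m * C)).intervalIntegrable _ _)
  refine h1.trans (le_of_eq ?_)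
  rw [intervalIntegral.integral_mul_const, integral_pow]
  simp
  ring

lemma auxI_bound (m : ℕ) (v : ℝ →ᵇ ℝ) (y t : ℝ) (ht : t ∈ Ioc (0 : ℝ) 1) :
    ‖auxI m v y t‖ ≤ t ^ m * (1 + m * ‖v‖) := by
  have h0 : 0 ≤ t ^ m := pow_nonneg ht.1.le _
  unfold auxI
  rw [norm_mul, Real.norm_of_nonneg h0]
  refine mul_le_mul_of_nonneg_left ((norm_add_le _ _).trans (add_le_add ?_ ?_)) h0
  · have h1 : 1 ≤ Real.sqrt (1 + (y * t) ^ 2) := by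
      rw [Real.one_le_sqrt]; nlinarith [sq_nonneg (y * t)]
    rw [Real.norm_of_nonneg (by positivity)]
    rw [div_le_one (by linarith)]
    exact h1
  · rw [norm_mul, Real.norm_of_nonneg (Nat.cast_nonneg m)]
    exact mul_le_mul_of_nonneg_left ((auxH_bound _ _).trans (v.norm_coe_le_norm _))
      (Nat.cast_nonneg m)

noncomputable def auxT (m : ℕ) (v : ℝ →ᵇ ℝ) : ℝ →ᵇ ℝ :=
  BoundedContinuousFunction.ofNormedAddCommGroup (fun y => ∫ t in (0 : ℝ)..1, auxI m v y t)
    (intervalIntegral.continuous_parametric_intervalIntegral_of_continuous' (auxI_cont m v) 0 1)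
    ((1 + m * ‖v‖) / (m + 1))
    (fun y => aux_int_le m _ _ (auxI_bound m v y))

lemma auxT_apply (m : ℕ) (v : ℝ →ᵇ ℝ) (y : ℝ) :
    auxT m v y = ∫ t in (0 : ℝ)..1, auxI m v y t := rfl

lemma auxT_dist (m : ℕ) (v w : ℝ →ᵇ ℝ) :
    dist (auxT m v) (auxT m w) ≤ ((m : ℝ) / (m + 1)) * dist v w := by
  rw [BoundedContinuousFunction.dist_le (by positivity)]
  intro y
  rw [auxT_apply, auxT_apply, Real.dist_eq, ← intervalIntegral.integral_sub
    ((auxI_cont1 m v y).intervalIntegrable _ _) ((auxI_cont1 m w y).intervalIntegrable _ _)]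
  have := aux_int_le m (fun t => auxI m v y t - auxI m w y t) (m * dist v w) (fun t ht => by
    have h0 : 0 ≤ t ^ m := pow_nonneg ht.1.le _
    have e : auxI m v y t - auxI m w y t
        = t ^ m * (m * (auxH (y * t) (v (y * t)) - auxH (y * t) (w (y * t)))) := by
      unfold auxI; ring
    rw [e, norm_mul, Real.norm_of_nonneg h0, norm_mul, Real.norm_of_nonneg (Nat.cast_nonneg m)]
    refine mul_le_mul_of_nonneg_left (mul_le_mul_of_nonneg_left ?_ (Nat.cast_nonneg m)) h0
    exact (auxH_lip _ _ _).trans (by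
      have := BoundedContinuousFunction.dist_coe_le_dist (f := v) (g := w) (y * t)
      rwa [Real.dist_eq] at this))
  rw [Real.norm_eq_abs] at this
  refine this.trans (le_of_eq (by ring))

lemma auxT_fixed (m : ℕ) : ∃ v : ℝ →ᵇ ℝ, auxT m v = v := by
  have hK : ((m : NNReal) / (m + 1)) < 1 := by
    rw [div_lt_one (by positivity)]
    exact lt_add_one _
  have hc : ContractingWith ((m : NNReal) / (m + 1)) (auxT m) :=
    ⟨hK, LipschitzWith.of_dist_le_mul (fun v w => by
      simpa using auxT_dist m v w)⟩
  exact ⟨_, hc.fixedPoint_isFixedPt⟩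

/-- Solution of the transformed equation. -/
lemma aux_W (m : ℕ) : ∃ W : ℝ → ℝ, Continuous W ∧ W 0 = 0 ∧
    ∀ y, 0 < y → HasDerivAt W (1 / Real.sqrt (1 + y ^ 2) - m / y * Real.tanh (W y)) y := by
  obtain ⟨v, hv⟩ := auxT_fixed m
  let φ : ℝ → ℝ := fun x => x ^ m * (1 / Real.sqrt (1 + x ^ 2) + m * auxH x (v x))
  have hφ : Continuous φ := by
    have h3 : Continuous (fun x : ℝ => auxH x (v x)) :=
      auxH_cont.comp (continuous_id.prodMk v.continuous)
    exact (by fun_prop : Continuous (fun x : ℝ => x ^ m)).mul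
      (auxSqrt_cont.add (continuous_const.mul h3))
  have key : ∀ y, y ^ m * (y * v y) = ∫ x in (0 : ℝ)..y, φ x := by
    intro y
    have h := intervalIntegral.smul_integral_comp_mul_left (a := 0) (b := 1) φ y
    rw [mul_zero, mul_one, smul_eq_mul] at h
    rw [← h]
    have e : ∀ t, φ (y * t) = y ^ m * auxI m v y t := by
      intro t; simp only [φ, auxI]; ring
    simp_rw [e]
    rw [intervalIntegral.integral_const_mul, ← auxT_apply, hv]
    ring
  refine ⟨fun y => y * v y, continuous_id.mul v.continuous, by simp, fun y hy => ?_⟩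
  have hF : HasDerivAt (fun y => ∫ x in (0 : ℝ)..y, φ x) (φ y) y :=
    intervalIntegral.integral_hasDerivAt_right (hφ.intervalIntegrable _ _)
      hφ.stronglyMeasurable.stronglyMeasurableAtFilter hφ.continuousAt
  have hp : y ^ m ≠ 0 := (pow_pos hy m).ne'
  have hD := hF.div (hasDerivAt_pow m y) hp
  have hE : (fun y => y * v y) =ᶠ[𝓝 y] (fun y => ∫ x in (0 : ℝ)..y, φ x) / (fun y => y ^ m) := by
    filter_upwards [lt_mem_nhds hy] with z hz
    have : z ^ m ≠ 0 := (pow_pos hz m).ne'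
    simp only [Pi.div_apply]
    rw [← key z]
    field_simp
  refine (hD.congr_of_eventuallyEq hE).congr_deriv ?_
  have hH := auxH_mul y (v y)
  have hpow : (m : ℝ) * y ^ (m - 1) = m * y ^ m / y := by
    rcases m with _ | k
    · simp
    · simp only [Nat.add_sub_cancel]; field_simp; ring
  rw [← key y, hpow]
  have hT : Real.tanh (y * v y) = y * v y - y * auxH y (v y) := by linarith
  simp only [hT, φ]
  have hs : Real.sqrt (1 + y ^ 2) ≠ 0 := (Real.sqrt_pos.2 (by positivity)).ne'
  field_simp
  ring

/-- Global existence of rotationally symmetric spacelike graphical translating solitons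
in the Lorentzian product ℍⁿ × ℝ. -/
theorem stmt_8 (n : ℕ) (hn : 2 ≤ n) (f₁ : ℝ) :
    ∃ f : ℝ → ℝ,
      ContDiffOn ℝ 1 f (Set.Ici 0) ∧
      (∀ s : ℝ, 0 < s → DifferentiableAt ℝ (derivWithin f (Set.Ici 0)) s) ∧
      f 0 = f₁ ∧ derivWithin f (Set.Ici 0) 0 = 0 ∧
      (∀ s ∈ Set.Ici (0 : ℝ), derivWithin f (Set.Ici 0) s ∈ Set.Ioo (-1 : ℝ) 1) ∧
      ∀ s : ℝ, 0 < s →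
        deriv (derivWithin f (Set.Ici 0)) s =
          (1 - (derivWithin f (Set.Ici 0) s) ^ 2) *
            (1 - ((n : ℝ) - 1) * (Real.cosh s / Real.sinh s) *
              derivWithin f (Set.Ici 0) s) := by
  obtain ⟨W, hWc, hW0, hW⟩ := aux_W (n - 1)
  have hcast : ((n - 1 : ℕ) : ℝ) = (n : ℝ) - 1 := by
    rw [Nat.cast_sub (by omega)]; simp
  rw [hcast] at hW
  let u : ℝ → ℝ := fun s => Real.tanh (W (Real.sinh s))
  have htc : Continuous Real.tanh :=
    continuous_iff_continuousAt.2 fun x => (aux_tanh_deriv x).continuousAt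
  have hu : Continuous u := htc.comp (hWc.comp Real.continuous_sinh)
  let f : ℝ → ℝ := fun s => f₁ + ∫ x in (0 : ℝ)..s, u x
  have hf : ∀ s, HasDerivAt f (u s) s := fun s =>
    (intervalIntegral.integral_hasDerivAt_right (hu.intervalIntegrable _ _)
      hu.stronglyMeasurable.stronglyMeasurableAtFilter hu.continuousAt).const_add f₁
  have hfd : ∀ s ∈ Ici (0 : ℝ), derivWithin f (Ici 0) s = u s := fun s hs =>
    (hf s).hasDerivWithinAt.derivWithin (uniqueDiffOn_Ici 0 s hs)
  have hev : ∀ s : ℝ, 0 < s → derivWithin f (Ici 0) =ᶠ[𝓝 s] u := fun s hs => by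
    filter_upwards [lt_mem_nhds hs] with z hz
    exact hfd z (le_of_lt hz)
  have hud : ∀ s : ℝ, 0 < s → HasDerivAt u ((1 - u s ^ 2) *
      (1 - ((n : ℝ) - 1) * (Real.cosh s / Real.sinh s) * u s)) s := fun s hs => by
    have hsp : 0 < Real.sinh s := Real.sinh_pos_iff.2 hs
    have h1 := (hW _ hsp).comp s (Real.hasDerivAt_sinh s)
    have h2 := (aux_tanh_deriv (W (Real.sinh s))).comp s h1
    refine h2.congr_deriv ?_
    have hsq : Real.sqrt (1 + Real.sinh s ^ 2) = Real.cosh s := by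
      rw [← Real.cosh_sq', Real.sqrt_sq (Real.cosh_pos s).le]
    have hc := (Real.cosh_pos s).ne'
    rw [hsq]
    simp only [u]
    field_simp
  refine ⟨f, ?_, ?_, ?_, ?_, ?_, ?_⟩
  · have : ContDiff ℝ 1 f := by
      rw [contDiff_one_iff_deriv]
      refine ⟨fun s => (hf s).differentiableAt, ?_⟩
      have : deriv f = u := funext fun s => (hf s).deriv
      rw [this]; exact hu
    exact this.contDiffOn
  · exact fun s hs => ((hud s hs).congr_of_eventuallyEq (hev s hs)).differentiableAt
  · simp [f]
  · rw [hfd 0 (mem_Ici.2 le_rfl)]; simp [u, hW0]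
  · intro s hs
    rw [hfd s hs]; exact aux_tanh_mem _
  · intro s hs
    rw [hfd s hs.le]
    exact ((hud s hs).congr_of_eventuallyEq (hev s hs)).deriv
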